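/- Let F be a field of characteristic ≠ 2 and let M be a module over the affine Hecke–Clifford algebra H_2^c(F) on which x_1² and x_2² both act as zero. Then for every z ∈ M: ((1 + c_1 c_2) x_1 + (1 − c_1 c_2) x_2) z = 0 and x_1 x_2 z = 0. -/

import Mathlib

/-- Generators of the affine Hecke–Clifford algebra `H_n^c(F)` (0-indexed):
`s i` for `i : Fin (n-1)`, and `x i`, `c i` for `i : Fin n`. -/
inductive AHCGen (n : ℕ) : Type
  | s : Fin (n - 1) → AHCGen n
  | x : Fin n → AHCGen n
  | c : Fin n → AHCGen n

/-- The index `i` of the transposition `s i`, as an index in `Fin n`. -/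
def idxL {n : ℕ} (i : Fin (n - 1)) : Fin n := ⟨i.val, by have := i.isLt; omega⟩

/-- The index `i + 1`, as an index in `Fin n`. -/
def idxR {n : ℕ} (i : Fin (n - 1)) : Fin n := ⟨i.val + 1, by have := i.isLt; omega⟩

open FreeAlgebra in
/-- The defining relations of the affine Hecke–Clifford algebra `H_n^c(F)`. -/
inductive AHCRel (F : Type) [Field F] (n : ℕ) :
    FreeAlgebra F (AHCGen n) → FreeAlgebra F (AHCGen n) → Prop
  | s_sq (i : Fin (n - 1)) :
      AHCRel F n (ι F (AHCGen.s i) * ι F (AHCGen.s i)) 1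
  | s_comm (i j : Fin (n - 1)) (h : i.val + 1 < j.val ∨ j.val + 1 < i.val) :
      AHCRel F n (ι F (AHCGen.s i) * ι F (AHCGen.s j))
        (ι F (AHCGen.s j) * ι F (AHCGen.s i))
  | braid (i j : Fin (n - 1)) (h : j.val = i.val + 1) :
      AHCRel F n (ι F (AHCGen.s i) * ι F (AHCGen.s j) * ι F (AHCGen.s i))
        (ι F (AHCGen.s j) * ι F (AHCGen.s i) * ι F (AHCGen.s j))
  | x_comm (i j : Fin n) :
      AHCRel F n (ι F (AHCGen.x i) * ι F (AHCGen.x j))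
        (ι F (AHCGen.x j) * ι F (AHCGen.x i))
  | c_sq (i : Fin n) :
      AHCRel F n (ι F (AHCGen.c i) * ι F (AHCGen.c i)) 1
  | c_anticomm (i j : Fin n) (h : i ≠ j) :
      AHCRel F n (ι F (AHCGen.c i) * ι F (AHCGen.c j))
        (-(ι F (AHCGen.c j) * ι F (AHCGen.c i)))
  | s_x (i : Fin (n - 1)) :
      AHCRel F n (ι F (AHCGen.s i) * ι F (AHCGen.x (idxL i)))
        (ι F (AHCGen.x (idxR i)) * ι F (AHCGen.s i)
          - (1 + ι F (AHCGen.c (idxL i)) * ι F (AHCGen.c (idxR i))))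
  | s_x_comm (i : Fin (n - 1)) (j : Fin n) (h1 : j ≠ idxL i) (h2 : j ≠ idxR i) :
      AHCRel F n (ι F (AHCGen.s i) * ι F (AHCGen.x j))
        (ι F (AHCGen.x j) * ι F (AHCGen.s i))
  | s_c1 (i : Fin (n - 1)) :
      AHCRel F n (ι F (AHCGen.s i) * ι F (AHCGen.c (idxL i)))
        (ι F (AHCGen.c (idxR i)) * ι F (AHCGen.s i))
  | s_c2 (i : Fin (n - 1)) :
      AHCRel F n (ι F (AHCGen.s i) * ι F (AHCGen.c (idxR i)))
        (ι F (AHCGen.c (idxL i)) * ι F (AHCGen.s i))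
  | s_c_comm (i : Fin (n - 1)) (j : Fin n) (h1 : j ≠ idxL i) (h2 : j ≠ idxR i) :
      AHCRel F n (ι F (AHCGen.s i) * ι F (AHCGen.c j))
        (ι F (AHCGen.c j) * ι F (AHCGen.s i))
  | x_c_anti (i : Fin n) :
      AHCRel F n (ι F (AHCGen.x i) * ι F (AHCGen.c i))
        (-(ι F (AHCGen.c i) * ι F (AHCGen.x i)))
  | x_c_comm (i j : Fin n) (h : i ≠ j) :
      AHCRel F n (ι F (AHCGen.x i) * ι F (AHCGen.c j))
        (ι F (AHCGen.c j) * ι F (AHCGen.x i))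

/-- The affine Hecke–Clifford algebra `H_n^c(F)`: the quotient of the free
`F`-algebra on the generators by the two-sided ideal generated by the defining
relations. -/
abbrev AHC (F : Type) [Field F] (n : ℕ) := RingQuot (AHCRel F n)

/-- The generator `s i` in `H_n^c(F)`. -/
noncomputable def sE (F : Type) [Field F] (n : ℕ) (i : Fin (n - 1)) : AHC F n :=
  RingQuot.mkAlgHom F (AHCRel F n) (FreeAlgebra.ι F (AHCGen.s i))

/-- The generator `x i` in `H_n^c(F)`. -/
noncomputable def xE (F : Type) [Field F] (n : ℕ) (i : Fin n) : AHC F n :=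
  RingQuot.mkAlgHom F (AHCRel F n) (FreeAlgebra.ι F (AHCGen.x i))

/-- The generator `c i` in `H_n^c(F)`. -/
noncomputable def cE (F : Type) [Field F] (n : ℕ) (i : Fin n) : AHC F n :=
  RingQuot.mkAlgHom F (AHCRel F n) (FreeAlgebra.ι F (AHCGen.c i))

theorem ahc_aux {R : Type} [Ring R] (s x y c d : R)
    (hxy : x * y = y * x) (hc : c * c = 1) (hd : d * d = 1) (hcd : c * d = -(d * c))
    (hs : s * x = y * s - (1 + c * d))
    (hxc : x * c = -(c * x)) (hyd : y * d = -(d * y)) (hxd : x * d = d * x)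
    (hyc : y * c = c * y) :
    (1 + c * d) * x + (1 - c * d) * y = y ^ 2 * s - s * x ^ 2 ∧
    (2 : R) * (x * y) = (1 - c * d) * (x * ((1 + c * d) * x + (1 - c * d) * y)
      - (1 - c * d) * x ^ 2) := by
  have he : (c * d) * (c * d) = -1 := by
    calc (c * d) * (c * d) = -(d * c) * (c * d) := by rw [← hcd]
      _ = -(d * (c * c) * d) := by noncomm_ring
      _ = -1 := by rw [hc, mul_one, hd]
  have hxe : x * (c * d) = -((c * d) * x) := by
    rw [← mul_assoc, hxc, neg_mul, mul_assoc, hxd, mul_assoc]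
  have hye : y * (c * d) = -((c * d) * y) := by
    rw [← mul_assoc, hyc, mul_assoc, hyd, mul_neg, mul_assoc]
  generalize c * d = e at *
  constructor
  · have h : s * x ^ 2 = y ^ 2 * s - y - y * e - (1 + e) * x := by
      calc s * x ^ 2 = (s * x) * x := by noncomm_ring
        _ = y * (s * x) - (1 + e) * x := by rw [hs]; rw [sub_mul, mul_assoc, hs]
        _ = _ := by rw [hs]; noncomm_ring
    rw [h, hye]; noncomm_ring
  · have h : x * ((1 + e) * x + (1 - e) * y) - (1 - e) * x ^ 2 = (1 + e) * (x * y) := by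
      calc _ = x * x + (x * e) * x + x * y - (x * e) * y - (1 - e) * x ^ 2 := by noncomm_ring
        _ = _ := by rw [hxe]; noncomm_ring
    rw [h]
    calc (2 : R) * (x * y) = (1 - (-1)) * (x * y) := by norm_num
      _ = (1 - e * e) * (x * y) := by rw [he]
      _ = _ := by noncomm_ring

/-- if `x_1²` and `x_2²` act as zero on an `H_2^c(F)`-module `M`
(char F ≠ 2), then `((1 + c_1 c_2) x_1 + (1 − c_1 c_2) x_2) z = 0` and
`x_1 x_2 z = 0` for every `z ∈ M`. -/
theorem zero_square_consequences (F : Type) [Field F] (hF : (2 : F) ≠ 0)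
    (M : Type) [AddCommGroup M] [Module (AHC F 2) M]
    (h1 : ∀ v : M, (xE F 2 0) ^ 2 • v = 0)
    (h2 : ∀ v : M, (xE F 2 1) ^ 2 • v = 0) (z : M) :
    ((1 + cE F 2 0 * cE F 2 1) * xE F 2 0
        + (1 - cE F 2 0 * cE F 2 1) * xE F 2 1) • z = 0 ∧
    (xE F 2 0 * xE F 2 1) • z = 0 := by
  have key : ∀ {a b}, AHCRel F 2 a b →
      RingQuot.mkAlgHom F (AHCRel F 2) a = RingQuot.mkAlgHom F (AHCRel F 2) b :=
    fun h => RingQuot.mkAlgHom_rel F h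
  obtain ⟨e1, e2⟩ := ahc_aux (sE F 2 0) (xE F 2 0) (xE F 2 1) (cE F 2 0) (cE F 2 1)
    (by simpa [xE] using key (AHCRel.x_comm 0 1))
    (by simpa [cE] using key (AHCRel.c_sq 0))
    (by simpa [cE] using key (AHCRel.c_sq 1))
    (by simpa [cE] using key (AHCRel.c_anticomm 0 1 (by decide)))
    (by simpa [sE, xE, cE, idxL, idxR] using key (AHCRel.s_x 0))
    (by simpa [xE, cE] using key (AHCRel.x_c_anti 0))
    (by simpa [xE, cE] using key (AHCRel.x_c_anti 1))
    (by simpa [xE, cE] using key (AHCRel.x_c_comm 0 1 (by decide)))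
    (by simpa [xE, cE] using key (AHCRel.x_c_comm 1 0 (by decide)))
  have hL : ((1 + cE F 2 0 * cE F 2 1) * xE F 2 0
        + (1 - cE F 2 0 * cE F 2 1) * xE F 2 1) • z = 0 := by
    rw [e1, sub_smul, mul_smul, mul_smul, h1, h2, smul_zero, sub_zero]
  refine ⟨hL, ?_⟩
  have h : (2 : AHC F 2) • (xE F 2 0 * xE F 2 1) • z = 0 := by
    rw [← mul_smul, e2, mul_smul, sub_smul (_ * _) (_ * _), mul_smul (xE F 2 0), hL, mul_smul _ (xE F 2 0 ^ 2), h1]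
    simp only [smul_zero, sub_zero]
  have hi : algebraMap F (AHC F 2) (2⁻¹) * 2 = 1 := by
    rw [← map_ofNat (algebraMap F (AHC F 2)) 2, ← map_mul, inv_mul_cancel₀ hF, map_one]
  rw [← one_smul (AHC F 2) ((xE F 2 0 * xE F 2 1) • z), ← hi, mul_smul, h, smul_zero]
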